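/- Suppose the pair (𝒫,𝒟) satisfies conditions (T1)–(T3), and let (n_k)_{k≥1} be a strictly increasing sequence with Φ(n_k+1) = 3 (so 𝒟_{n_k+1} = {0, a_{n_k+1}, b_{n_k+1}}) and limsup_{k→∞} b_{n_k+1}/p_{n_k+1} < 2/3. Then there exist ε > 0 and N ∈ ℕ such that for every k > N, every ξ with |ξ| < 1, every σ ∈ {−1,1}^ℕ, every admissible α, and every λ ∈ Λ_{n_k}^{σ,α}, one has |m_{𝒟_{n_k+1}}((ξ + λ)/P_{n_k+1})| ≥ ε. -/

import Mathlib

open MeasureTheory Filter Finset Real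
open scoped ENNReal NNReal

noncomputable section

/-- `P n = p 1 * p 2 * ⋯ * p n`. -/
def Pprod (p : ℕ → ℕ) (n : ℕ) : ℕ := ∏ i ∈ Finset.Icc 1 n, p i

/-- The uniform probability measure on the finite set `s • E ⊆ ℝ`. -/
def unifD (E : Finset ℕ) (s : ℝ) : Measure ℝ :=
  (E.card : ℝ≥0∞)⁻¹ • ∑ d ∈ E, Measure.dirac (s * (d : ℝ))

/-- The finite convolutions `μ_n = δ_{P₁⁻¹D₁} ∗ ⋯ ∗ δ_{Pₙ⁻¹Dₙ}`. -/
def muN (p : ℕ → ℕ) (D : ℕ → Finset ℕ) : ℕ → Measure ℝ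
  | 0 => Measure.dirac 0
  | n + 1 => Measure.conv (muN p D n) (unifD (D (n + 1)) ((Pprod p (n + 1) : ℝ)⁻¹))

/-- `μ` is the weak limit of the sequence of measures `ν n`. -/
def IsWeakLimit (ν : ℕ → Measure ℝ) (μ : Measure ℝ) : Prop :=
  ∀ f : BoundedContinuousFunction ℝ ℝ,
    Tendsto (fun n => ∫ x, f x ∂ν n) atTop (nhds (∫ x, f x ∂μ))

/-- `μ` is the Moran measure attached to `(p, D)`: the infinite convolution
`δ_{P₁⁻¹D₁} ∗ δ_{P₂⁻¹D₂} ∗ ⋯`, in the sense of weak convergence. -/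
def IsMoran (p : ℕ → ℕ) (D : ℕ → Finset ℕ) (μ : Measure ℝ) : Prop :=
  IsProbabilityMeasure μ ∧ IsWeakLimit (muN p D) μ

/-- The exponentials `e_λ, λ ∈ Λ` are pairwise orthogonal in `L²(μ)`. -/
def IsOrthSet (μ : Measure ℝ) (Λ : Set ℝ) : Prop :=
  ∀ l ∈ Λ, ∀ l' ∈ Λ, l ≠ l' →
    ∫ x : ℝ, Complex.exp (2 * Real.pi * Complex.I * (l - l') * x) ∂μ = 0

/-- `Λ` is a spectrum of `μ`: the exponentials `e_λ, λ ∈ Λ` form an orthonormal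
basis of `L²(μ)` (orthonormal + maximal, i.e. complete). -/
def IsSpectrum (μ : Measure ℝ) (Λ : Set ℝ) : Prop :=
  IsOrthSet μ Λ ∧
  ∀ f : ℝ → ℂ, MemLp f 2 μ →
    (∀ l ∈ Λ, ∫ x : ℝ, f x * Complex.exp (-(2 * Real.pi * Complex.I * l * x)) ∂μ = 0) →
    f =ᵐ[μ] 0

def IsSpectralMeasure (μ : Measure ℝ) : Prop := ∃ Λ : Set ℝ, Λ.Countable ∧ IsSpectrum μ Λ

/-- Condition (T1): `D n = {0,1,…,N-1}` with `3 < N`, `N ∣ p n`, `N < p n`. -/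
def T1cond (p : ℕ → ℕ) (D : ℕ → Finset ℕ) (n : ℕ) : Prop :=
  ∃ N : ℕ, 3 < N ∧ N ∣ p n ∧ N < p n ∧ D n = Finset.range N

/-- Condition (T2) (except for the global sup condition): `D n = {0,a,b}`,
`0 < a < b`, `gcd(a,b) = 1`, `{a,b} ≡ {1,2} (mod 3)`, `3 ∣ p n`. -/
def T2cond (p : ℕ → ℕ) (D : ℕ → Finset ℕ) (n : ℕ) : Prop :=
  ∃ a b : ℕ, 0 < a ∧ a < b ∧ Nat.gcd a b = 1 ∧
    (a % 3 = 1 ∧ b % 3 = 2 ∨ a % 3 = 2 ∧ b % 3 = 1) ∧ 3 ∣ p n ∧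
    D n = ({0, a, b} : Finset ℕ)

/-- Condition (T3): `D n = {0,d}` with `0 < d < p n` and `p n / gcd (d, p n)` even.
(The decomposition `d = 2^l d'` with `d'` odd always exists, with `l` the 2-adic
valuation of `d`.) -/
def T3cond (p : ℕ → ℕ) (D : ℕ → Finset ℕ) (n : ℕ) : Prop :=
  ∃ d : ℕ, 0 < d ∧ d < p n ∧ 2 ∣ p n / Nat.gcd d (p n) ∧ D n = ({0, d} : Finset ℕ)

/-- The pair `(p, D)` satisfies conditions (T1)–(T3), including the requirement
`sup {b n / p n : n of type (T2)} < 2/3`. -/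
def SatisfiesT (p : ℕ → ℕ) (D : ℕ → Finset ℕ) : Prop :=
  (∀ n, 1 ≤ n → T1cond p D n ∨ T2cond p D n ∨ T3cond p D n) ∧
  ∃ c : ℝ, c < 2 / 3 ∧ ∀ n, 1 ≤ n → T2cond p D n → (((D n).sup id : ℕ) : ℝ) / (p n : ℝ) ≤ c

/-- `σ ∈ {-1,1}^ℕ`. -/
def IsSigma (σ : ℕ → ℤ) : Prop := ∀ n, σ n = 1 ∨ σ n = -1

/-- `α` is admissible: `α m ∈ {-⌊N/2⌋, …, N - 1 - ⌊N/2⌋}` where `N = #(D m)`,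
for every `m` with `#(D m) = N_m > 3`. -/
def Admissible (D : ℕ → Finset ℕ) (α : ℕ → ℤ) : Prop :=
  ∀ m, 1 ≤ m → 3 < (D m).card →
    -(((D m).card / 2 : ℕ) : ℤ) ≤ α m ∧
      α m ≤ ((D m).card : ℤ) - 1 - (((D m).card / 2 : ℕ) : ℤ)

/-- The largest element `d n` (resp. `b n`) of `D n`. -/
def bOf (D : ℕ → Finset ℕ) (n : ℕ) : ℕ := (D n).sup id

/-- The middle element `a n` of a digit set `{0, a, b}`. -/
def aOf (D : ℕ → Finset ℕ) (n : ℕ) : ℕ := (((D n).erase 0).erase ((D n).sup id)).sup id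

/-- `l n`: the 2-adic valuation of `d n`, i.e. `d n = 2^(l n) * d'` with `d'` odd. -/
def lOf (D : ℕ → Finset ℕ) (n : ℕ) : ℕ := padicValNat 2 ((D n).sup id)

/-- The finite set `Λ_n^{σ,α}`. -/
def LamN (p : ℕ → ℕ) (D : ℕ → Finset ℕ) (σ α : ℕ → ℤ) (n : ℕ) : Set ℝ :=
  { x | ∃ c : ℕ → ℝ,
      (∀ i, (D i).card = 2 → c i = 0 ∨ c i = (σ i : ℝ) / 2 ^ (1 + lOf D i)) ∧
      (∀ i, (D i).card = 3 → c i = 0 ∨ c i = 1 / 3 ∨ c i = -(1 / 3)) ∧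
      (∀ i, 3 < (D i).card → c i = (α i : ℝ) / ((D i).card : ℝ)) ∧
      x = ∑ i ∈ Finset.Icc 1 n, (Pprod p i : ℝ) * c i }

/-- `Λ^{σ,α} = ⋃_{n ≥ 1} Λ_n^{σ,α}`. -/
def Lam (p : ℕ → ℕ) (D : ℕ → Finset ℕ) (σ α : ℕ → ℤ) : Set ℝ :=
  ⋃ n ∈ Set.Ici 1, LamN p D σ α n

/-- The Fourier transform `μ̂(ξ) = ∫ e^{-2πixξ} dμ(x)`. -/
def FT (μ : Measure ℝ) (ξ : ℝ) : ℂ :=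
  ∫ x : ℝ, Complex.exp (-(2 * Real.pi * Complex.I * x * ξ)) ∂μ

/-- The mask polynomial `m_E(t) = (1/#E) ∑_{d ∈ E} e^{2πidt}`. -/
def mask (E : Finset ℕ) (t : ℝ) : ℂ :=
  (E.card : ℂ)⁻¹ * ∑ d ∈ E, Complex.exp (2 * Real.pi * Complex.I * (d : ℝ) * t)

end

noncomputable section

lemma aux_cos {X : ℝ} (h : Real.cos X = -(1/2)) (hX : |X| < 4 * Real.pi / 3) :
    X = 2 * Real.pi / 3 ∨ X = -(2 * Real.pi / 3) := by
  have h2 : Real.cos (2 * Real.pi / 3) = -(1/2) := by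
    have : 2 * Real.pi / 3 = Real.pi - Real.pi / 3 := by ring
    rw [this, Real.cos_pi_sub, Real.cos_pi_div_three]
  rw [← h2, eq_comm, Real.cos_eq_cos_iff] at h
  have hpi := Real.pi_pos
  rw [abs_lt] at hX
  obtain ⟨k, hk | hk⟩ := h
  · have h1 : (k : ℝ) < 1 := by nlinarith
    have h3 : (-1 : ℝ) < k := by nlinarith
    have h1' : k < 1 := by exact_mod_cast h1
    have h3' : -1 < k := by exact_mod_cast h3
    have : k = 0 := by omega
    subst this
    left; simpa using hk
  · have h1 : (k : ℝ) < 1 := by nlinarith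
    have h3 : (-1 : ℝ) < k := by nlinarith
    have h1' : k < 1 := by exact_mod_cast h1
    have h3' : -1 < k := by exact_mod_cast h3
    have : k = 0 := by omega
    subst this
    right; simpa using hk

lemma aux_ne {x y : ℝ} (hx : |x| < 2 / 3) (hy : |y| < 2 / 3) (hxy : 0 ≤ x * y) :
    1 + Complex.exp ((2 * Real.pi * x : ℝ) * Complex.I)
      + Complex.exp ((2 * Real.pi * y : ℝ) * Complex.I) ≠ 0 := by
  intro h
  have hre := congrArg Complex.re h
  have him := congrArg Complex.im h
  simp only [Complex.add_re, Complex.add_im, Complex.exp_ofReal_mul_I_re,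
    Complex.exp_ofReal_mul_I_im, Complex.one_re, Complex.one_im, Complex.zero_re,
    Complex.zero_im] at hre him
  have hpi := Real.pi_pos
  have s1 := Real.sin_sq_add_cos_sq (2 * Real.pi * x)
  have s2 := Real.sin_sq_add_cos_sq (2 * Real.pi * y)
  have e : Real.cos (2 * Real.pi * y) = -1 - Real.cos (2 * Real.pi * x) := by linarith
  have e2 : Real.sin (2 * Real.pi * y) = - Real.sin (2 * Real.pi * x) := by linarith
  rw [e, e2] at s2
  have c1 : Real.cos (2 * Real.pi * x) = -(1/2) := by nlinarith
  have c2 : Real.cos (2 * Real.pi * y) = -(1/2) := by linarith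
  have b1 : |2 * Real.pi * x| < 4 * Real.pi / 3 := by
    rw [abs_mul, abs_of_pos (by positivity)]; nlinarith
  have b2 : |2 * Real.pi * y| < 4 * Real.pi / 3 := by
    rw [abs_mul, abs_of_pos (by positivity)]; nlinarith
  have hs : Real.sin (2 * Real.pi * x) ≠ 0 := by
    intro h0; rw [h0, c1] at s1; norm_num at s1
  have hprod : 0 ≤ (2 * Real.pi * x) * (2 * Real.pi * y) := by
    have : (2 * Real.pi * x) * (2 * Real.pi * y) = 4 * Real.pi ^ 2 * (x * y) := by ring
    rw [this]; positivity
  rcases aux_cos c1 b1 with h1 | h1 <;> rcases aux_cos c2 b2 with h2 | h2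
  · rw [h2, ← h1] at e2; exact hs (by linarith)
  · rw [h1, h2] at hprod; nlinarith
  · rw [h1, h2] at hprod; nlinarith
  · rw [h2, ← h1] at e2; exact hs (by linarith)

lemma aux_compact {c : ℝ} (hc : c < 2 / 3) :
    ∃ ε : ℝ, 0 < ε ∧ ∀ x y : ℝ, |x| ≤ c → |y| ≤ c → 0 ≤ x * y →
      ε ≤ ‖1 + Complex.exp ((2 * Real.pi * x : ℝ) * Complex.I)
      + Complex.exp ((2 * Real.pi * y : ℝ) * Complex.I)‖ := by
  set S : Set (ℝ × ℝ) := (Set.Icc (-c) c ×ˢ Set.Icc (-c) c) ∩ {q | 0 ≤ q.1 * q.2} with hS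
  have hScomp : IsCompact S :=
    (isCompact_Icc.prod isCompact_Icc).inter_right
      (isClosed_le continuous_const (by fun_prop))
  have hcont : ContinuousOn (fun q : ℝ × ℝ =>
      ‖1 + Complex.exp ((2 * Real.pi * q.1 : ℝ) * Complex.I)
      + Complex.exp ((2 * Real.pi * q.2 : ℝ) * Complex.I)‖) S := by
    apply Continuous.continuousOn
    fun_prop
  rcases S.eq_empty_or_nonempty with he | hne
  · refine ⟨1, one_pos, fun x y hx hy hxy => ?_⟩
    have : (x, y) ∈ S := ⟨⟨abs_le.mp hx, abs_le.mp hy⟩, hxy⟩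
    rw [he] at this; exact absurd this (Set.notMem_empty _)
  · obtain ⟨q, hq, hmin⟩ := hScomp.exists_isMinOn hne hcont
    refine ⟨‖1 + Complex.exp ((2 * Real.pi * q.1 : ℝ) * Complex.I)
      + Complex.exp ((2 * Real.pi * q.2 : ℝ) * Complex.I)‖, ?_, fun x y hx hy hxy => ?_⟩
    rotate_left
    · exact hmin (show (x, y) ∈ S from ⟨⟨abs_le.mp hx, abs_le.mp hy⟩, hxy⟩)
    · exact norm_pos_iff.mpr (aux_ne ((abs_le.mpr hq.1.1).trans_lt hc)
        ((abs_le.mpr hq.1.2).trans_lt hc) hq.2)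

lemma aux_Pprod_succ (p : ℕ → ℕ) (n : ℕ) : Pprod p (n + 1) = Pprod p n * p (n + 1) := by
  unfold Pprod
  rw [Finset.prod_Icc_succ_top (by omega)]

lemma aux_Pprod_gt (p : ℕ → ℕ) (hp : ∀ n, 1 ≤ n → 1 < p n) (n : ℕ) : n < Pprod p n := by
  induction n with
  | zero => simp [Pprod]
  | succ n ih =>
    rw [aux_Pprod_succ]
    have := hp (n + 1) (by omega)
    nlinarith

lemma aux_sum (p : ℕ → ℕ) (hp : ∀ n, 1 ≤ n → 1 < p n) (c : ℕ → ℝ)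
    (hc : ∀ i, 1 ≤ i → |c i| ≤ 1 / 2) (n : ℕ) :
    |∑ i ∈ Finset.Icc 1 n, (Pprod p i : ℝ) * c i| ≤ Pprod p n := by
  induction n with
  | zero => simp [Pprod]
  | succ n ih =>
    rw [Finset.sum_Icc_succ_top (by omega)]
    have h2 : (2 : ℝ) ≤ p (n + 1) := by exact_mod_cast hp (n + 1) (by omega)
    have h1 := hc (n + 1) (by omega)
    have e : (Pprod p (n + 1) : ℝ) = Pprod p n * p (n + 1) := by
      rw [aux_Pprod_succ]; push_cast; ring
    have h0 : (0 : ℝ) ≤ Pprod p n := by positivity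
    have h0' : (0 : ℝ) ≤ Pprod p (n + 1) := by positivity
    refine (abs_add_le _ _).trans ?_
    rw [abs_mul, abs_of_nonneg h0']
    nlinarith

lemma aux_card3 {a b : ℕ} (ha : 0 < a) (hab : a < b) : ({0, a, b} : Finset ℕ).card = 3 := by
  rw [Finset.card_eq_three]
  exact ⟨0, a, b, by omega, by omega, by omega, rfl⟩

lemma aux_c (p : ℕ → ℕ) (D : ℕ → Finset ℕ) (σ α : ℕ → ℤ) (hσ : IsSigma σ)
    (hα : Admissible D α) (c : ℕ → ℝ)
    (h2 : ∀ i, (D i).card = 2 → c i = 0 ∨ c i = (σ i : ℝ) / 2 ^ (1 + lOf D i))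
    (h3 : ∀ i, (D i).card = 3 → c i = 0 ∨ c i = 1 / 3 ∨ c i = -(1 / 3))
    (h4 : ∀ i, 3 < (D i).card → c i = (α i : ℝ) / ((D i).card : ℝ))
    (i : ℕ) (hi : 1 ≤ i) (hT : T1cond p D i ∨ T2cond p D i ∨ T3cond p D i) :
    |c i| ≤ 1 / 2 := by
  rcases hT with ⟨N, hN, -, -, hD⟩ | ⟨a, b, ha, hab, -, -, -, hD⟩ | ⟨d, hd, -, -, hD⟩
  · have hcard : 3 < (D i).card := by rw [hD, Finset.card_range]; exact hN
    obtain ⟨l, u⟩ := hα i hi hcard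
    rw [h4 i hcard]
    have hpos : (0 : ℝ) < (D i).card := by exact_mod_cast (by omega : 0 < (D i).card)
    rw [abs_div, abs_of_pos hpos, div_le_iff₀ hpos]
    have l' : -((D i).card : ℤ) ≤ 2 * α i := by omega
    have u' : 2 * α i ≤ ((D i).card : ℤ) := by omega
    have l'' : -((D i).card : ℝ) ≤ 2 * α i := by exact_mod_cast l'
    have u'' : 2 * (α i : ℝ) ≤ ((D i).card : ℝ) := by exact_mod_cast u'
    rw [abs_le]; constructor <;> linarith
  · have hcard : (D i).card = 3 := by rw [hD]; exact aux_card3 ha hab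
    rcases h3 i hcard with h | h | h <;> rw [h] <;> norm_num [abs_le]
  · have hcard : (D i).card = 2 := by
      rw [hD]; exact Finset.card_pair (by omega)
    rcases h2 i hcard with h | h
    · rw [h]; norm_num
    · have hs : |(σ i : ℝ)| = 1 := by rcases hσ i with h | h <;> rw [h] <;> norm_num
      rw [h, abs_div, hs, abs_of_pos (by positivity)]
      apply one_div_le_one_div_of_le (by norm_num)
      have : (1 : ℝ) ≤ 2 ^ (lOf D i) := one_le_pow₀ (by norm_num)
      rw [pow_add]; linarith

/-- Lemma 5.3. If `D (n_k + 1) = {0, a, b}` is of type (T2) and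
`limsup_k b_{n_k+1}/p_{n_k+1} < 2/3`, then `|m_{D_{n_k+1}}((ξ+λ)/P_{n_k+1})| ≥ ε` for
some `ε > 0`, all large `k`, all `|ξ| < 1` and `λ ∈ Λ_{n_k}^{σ,α}`. -/
theorem triple_digit_mask_lower_bound (p : ℕ → ℕ) (D : ℕ → Finset ℕ)
    (hp : ∀ n, 1 ≤ n → 1 < p n) (hT : SatisfiesT p D)
    (n : ℕ → ℕ) (hmono : StrictMono n) (hT2 : ∀ k, T2cond p D (n k + 1))
    (hlim : Filter.limsup (fun k => (bOf D (n k + 1) : ℝ) / (p (n k + 1) : ℝ))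
        Filter.atTop < 2 / 3) :
    ∃ ε : ℝ, 0 < ε ∧ ∃ N : ℕ, ∀ k, N < k → ∀ ξ : ℝ, |ξ| < 1 →
      ∀ σ α : ℕ → ℤ, IsSigma σ → Admissible D α → ∀ l ∈ LamN p D σ α (n k),
        ε ≤ ‖mask (D (n k + 1)) ((ξ + l) / (Pprod p (n k + 1) : ℝ))‖ := by
  obtain ⟨hTT, c, hc, hcb⟩ := hT
  set c' : ℝ := (c + 2 / 3) / 2 with hc'
  obtain ⟨ε, hε, hmain⟩ := aux_compact (c := c') (by linarith)
  obtain ⟨N, hN⟩ := exists_nat_one_div_lt (show (0 : ℝ) < (2 / 3 - c) / 2 by linarith)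
  refine ⟨ε / 3, by positivity, N, fun k hk ξ hξ σ α hσ hα l hl => ?_⟩
  obtain ⟨co, h2, h3, h4, rfl⟩ := hl
  have hco := fun i hi => aux_c p D σ α hσ hα co h2 h3 h4 i hi (hTT i hi)
  have hl := aux_sum p hp co hco (n k)
  set l := ∑ i ∈ Finset.Icc 1 (n k), (Pprod p i : ℝ) * co i
  have hcb' := hcb (n k + 1) (by omega) (hT2 k)
  obtain ⟨a, b, ha, hab, -, -, -, hD⟩ := hT2 k
  have hsup : (D (n k + 1)).sup id = b := by
    rw [hD]; simp; omega
  rw [hsup] at hcb'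
  have hp0 : (0 : ℝ) < p (n k + 1) := by
    exact_mod_cast (by have := hp (n k + 1) (by omega); omega : 0 < p (n k + 1))
  have hPn : N + 1 < Pprod p (n k) := by
    have h1 := aux_Pprod_gt p hp (n k)
    have h2 := hmono.id_le k
    simp only [id] at h2
    omega
  have hP : (N : ℝ) + 1 < Pprod p (n k) := by exact_mod_cast hPn
  have hP0 : (0 : ℝ) < Pprod p (n k) := by
    have : (0 : ℝ) ≤ N := by positivity
    linarith
  have hinv : 1 / (Pprod p (n k) : ℝ) < (2 / 3 - c) / 2 :=
    (one_div_le_one_div_of_le (by positivity) hP.le).trans_lt hN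
  set t := (ξ + l) / (Pprod p (n k + 1) : ℝ) with ht
  have hbt : (b : ℝ) * |t| ≤ c' := by
    have e : (Pprod p (n k + 1) : ℝ) = Pprod p (n k) * p (n k + 1) := by
      rw [aux_Pprod_succ]; push_cast; ring
    have habs : |ξ + l| ≤ 1 + Pprod p (n k) := (abs_add_le _ _).trans (by linarith)
    have hr0 : 0 ≤ (b : ℝ) / p (n k + 1) := by positivity
    have hq : |ξ + l| / Pprod p (n k) ≤ 1 + 1 / (Pprod p (n k) : ℝ) := by
      rw [div_le_iff₀ hP0]
      have : (1 + 1 / (Pprod p (n k) : ℝ)) * Pprod p (n k) = 1 + Pprod p (n k) := by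
        field_simp; ring
      linarith
    have e2 : (b : ℝ) * |t| = (b / p (n k + 1)) * (|ξ + l| / Pprod p (n k)) := by
      rw [ht, e, abs_div, abs_of_pos (mul_pos hP0 hp0)]
      field_simp
    rw [e2]
    have hi0 : 0 < 1 / (Pprod p (n k) : ℝ) := by positivity
    calc (b / p (n k + 1) : ℝ) * (|ξ + l| / Pprod p (n k))
        ≤ c * (1 + 1 / (Pprod p (n k) : ℝ)) :=
          mul_le_mul hcb' hq (by positivity) (hr0.trans hcb')
      _ ≤ c' := by nlinarith
  have hat : (a : ℝ) * |t| ≤ c' := by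
    have : (a : ℝ) ≤ b := by exact_mod_cast hab.le
    exact (mul_le_mul_of_nonneg_right this (abs_nonneg t)).trans hbt
  have key := hmain (a * t) (b * t) (by rwa [abs_mul, Nat.abs_cast])
    (by rwa [abs_mul, Nat.abs_cast])
    (by
      have : (a : ℝ) * t * (b * t) = a * b * t ^ 2 := by ring
      rw [this]; positivity)
  have hmask : mask (D (n k + 1)) t = (3 : ℂ)⁻¹ *
      (1 + Complex.exp ((2 * Real.pi * (a * t) : ℝ) * Complex.I)
      + Complex.exp ((2 * Real.pi * (b * t) : ℝ) * Complex.I)) := by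
    unfold mask
    rw [hD, aux_card3 ha hab, Finset.sum_insert (by simp; omega), Finset.sum_pair (by omega)]
    push_cast
    rw [add_assoc]
    congr 2
    · simp
    · congr 2 <;> ring
  rw [hmask, norm_mul, norm_inv]
  have : ‖(3 : ℂ)‖ = 3 := by norm_num
  rw [this]
  linarith

end
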